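/- Let s > 1/2 and let Ω ⊂ ℝ² be a bounded open set, D = Ω × (-π, π). There exists a constant C = C(s) > 0 such that for all smooth divergence-free vector fields u, v, w : D → ℝ³ that are 2π-periodic with mean zero in x₃ and vanish on the lateral boundary ∂Ω × (-π, π), one has |∫_D (u·∇)v · w dx| ≤ C ‖u‖_{L²(D)}^{1/2} ‖∇u‖_{L²(D)}^{1/2} ‖v‖_{L²(D)}^{1/2} ‖∇v‖_{L²(D)}^{1/2} ‖∇w‖_{L²(D)}^{1 - 1/(2s)} ‖∂₃^s ∇w‖_{L²(D)}^{1/(2s)}. -/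

import Mathlib

open MeasureTheory Set
open scoped Real

/-- The three coordinate directions of the cylinder `(ℝ × ℝ) × ℝ`
(two horizontal, one vertical). -/
def dir3 : Fin 3 → (ℝ × ℝ) × ℝ := ![((1, 0), 0), ((0, 1), 0), ((0, 0), 1)]

/-!
Since `u` is divergence free, the trilinear form equals `-∫ (v ⊗ u) : ∇w`. On each vertical line
Carlson's inequality, valid because `∑ |k| ^ (-2s)` over `k ≠ 0` converges for `s > 1/2`, bounds
the supremum of `|∇w|` by the `L²` norms of `∇w` and `∂₃^s ∇w` on that line, raised to the powers
`1 - 1/(2s)` and `1/(2s)`; the other two factors `u` and `v` are left in the vertical `L²`.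
Horizontally, Hölder's inequality puts the vertical norms of `u`, `v` and `∇w` in `L⁴`, `L⁴` and
`L²`. Finally `∫ |u|² dx₃` is a function of two variables, so the embedding `W^{1,1} ⊆ L²` applied
to it controls the horizontal `L⁴` norm as in Ladyzhenskaya's inequality.
-/

/-- The constant in `sq_sum_le_carlsonConst_mul`, the discrete Carlson inequality with weight
`|k| ^ r`. -/
noncomputable def carlsonConst (r : ℝ) : ℝ := 2 ^ (r + 1) / (r - 1)

lemma carlsonConst_pos {r : ℝ} (hr : 1 < r) : 0 < carlsonConst r :=
  div_pos (by positivity) (sub_pos.2 hr)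

lemma one_sub_one_div_nonneg {r : ℝ} (hr : 1 ≤ r) : 0 ≤ 1 - 1 / r :=
  sub_nonneg.2 ((div_le_one (by linarith)).2 hr)

lemma add_rpow_le_two_rpow_mul {r x y : ℝ} (hr : 1 ≤ r) (hx : 0 ≤ x) (hy : 0 ≤ y) :
    (x + y) ^ r ≤ 2 ^ (r - 1) * (x ^ r + y ^ r) := by
  lift x to NNReal using hx
  lift y to NNReal using hy
  exact_mod_cast NNReal.rpow_add_le_mul_rpow_add_rpow x y hr

lemma sum_range_add_rpow_neg_le {r m : ℝ} (hr : 1 < r) (hm : 0 < m) (n : ℕ) :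
    ∑ i ∈ Finset.range n, (m + (i + 1 : ℕ)) ^ (-r) ≤ m ^ (1 - r) / (r - 1) := by
  have hanti : AntitoneOn (fun x : ℝ => x ^ (-r)) (Icc m (m + n)) := fun x hx _ _ hxy =>
    Real.rpow_le_rpow_of_nonpos (hm.trans_le hx.1) hxy (by linarith)
  have hzero : (0 : ℝ) ∉ uIcc m (m + n) := by
    rw [uIcc_of_le (by simp)]
    exact fun h => hm.not_ge h.1
  have : 0 < r - 1 := sub_pos.2 hr
  calc ∑ i ∈ Finset.range n, (m + (i + 1 : ℕ)) ^ (-r) ≤ ∫ x in m..m + n, x ^ (-r) :=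
        hanti.sum_le_integral
    _ = (m ^ (1 - r) - (m + n) ^ (1 - r)) / (r - 1) := by
        rw [integral_rpow (Or.inr ⟨by linarith, hzero⟩), neg_add_eq_sub, ← neg_sub r 1, div_neg,
          ← neg_div, neg_sub]
    _ ≤ m ^ (1 - r) / (r - 1) := by
        gcongr
        exact sub_le_self _ (by positivity)

lemma sum_int_add_abs_rpow_neg_le {r m : ℝ} (hr : 1 < r) (hm : 0 < m) {S : Finset ℤ}
    (hS : 0 ∉ S) : ∑ k ∈ S, (m + |(k : ℝ)|) ^ (-r) ≤ 2 * (m ^ (1 - r) / (r - 1)) := by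
  set weight : ℤ → ℝ := fun k => (m + |(k : ℝ)|) ^ (-r)
  have hnat : ∀ n : ℕ, ∑ i ∈ Finset.range n, weight (i + 1) ≤ m ^ (1 - r) / (r - 1) := fun n => by
    refine le_of_eq_of_le (Finset.sum_congr rfl fun i _ => ?_) (sum_range_add_rpow_neg_le hr hm n)
    simp [weight, abs_of_nonneg (show (0 : ℝ) ≤ i + 1 by positivity)]
  have hnonneg : ∀ k, 0 ≤ weight k := fun k => by positivity
  have hpos : HasSum (fun i : ℕ => weight (i + 1)) (∑' i : ℕ, weight (i + 1)) :=
    (summable_of_sum_range_le (fun _ => hnonneg _) hnat).hasSum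
  have hneg : HasSum (fun i : ℕ => weight (-(i + 1))) (∑' i : ℕ, weight (i + 1)) := by
    simpa only [weight, Int.cast_neg, abs_neg] using hpos
  have hinsert := sum_le_hasSum (insert 0 S) (fun k _ => hnonneg k)
    (HasSum.of_add_one_of_neg_add_one hpos hneg)
  have htsum := Real.tsum_le_of_sum_range_le (fun _ => hnonneg _) hnat
  rw [Finset.sum_insert hS] at hinsert
  linarith

/-- Cauchy–Schwarz with the weight `(m + |k|) ^ r`. The two summands on the right balance at
`m = (b / a) ^ (1 / r)`. -/
lemma sq_sum_le_of_weight {r m : ℝ} (hr : 1 < r) (hm : 0 < m) {c : ℤ → ℝ} (hc₀ : c 0 = 0)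
    {a b : ℝ} (ha : HasSum (fun k => c k ^ 2) a)
    (hb : HasSum (fun k : ℤ => |(k : ℝ)| ^ r * c k ^ 2) b) (S : Finset ℤ) :
    (∑ k ∈ S, c k) ^ 2 ≤ carlsonConst r / 2 * m ^ (1 - r) * (m ^ r * a + b) := by
  have : 0 < r - 1 := sub_pos.2 hr
  have hweighted : ∑ k ∈ S.erase 0, (m + |(k : ℝ)|) ^ r * c k ^ 2 ≤
      2 ^ (r - 1) * (m ^ r * a + b) := by
    calc ∑ k ∈ S.erase 0, (m + |(k : ℝ)|) ^ r * c k ^ 2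
        ≤ ∑ k ∈ S.erase 0, 2 ^ (r - 1) * (m ^ r * c k ^ 2 + |(k : ℝ)| ^ r * c k ^ 2) := by
          refine Finset.sum_le_sum fun k _ => ?_
          rw [← add_mul, ← mul_assoc]
          gcongr
          exact add_rpow_le_two_rpow_mul hr.le hm.le (abs_nonneg _)
      _ ≤ 2 ^ (r - 1) * (m ^ r * a + b) :=
          sum_le_hasSum _ (fun k _ => by positivity) (((ha.mul_left _).add hb).mul_left _)
  calc (∑ k ∈ S, c k) ^ 2 = (∑ k ∈ S.erase 0, c k) ^ 2 := by rw [Finset.sum_erase _ hc₀]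
    _ ≤ (∑ k ∈ S.erase 0, (m + |(k : ℝ)|) ^ (-r)) *
          ∑ k ∈ S.erase 0, (m + |(k : ℝ)|) ^ r * c k ^ 2 := by
        refine Finset.sum_sq_le_sum_mul_sum_of_sq_le_mul _ (fun k _ => by positivity)
          (fun k _ => by positivity) fun k _ => le_of_eq ?_
        rw [← mul_assoc, ← Real.rpow_add (by positivity), neg_add_cancel, Real.rpow_zero, one_mul]
    _ ≤ 2 * (m ^ (1 - r) / (r - 1)) * (2 ^ (r - 1) * (m ^ r * a + b)) :=
        mul_le_mul (sum_int_add_abs_rpow_neg_le hr hm (S.notMem_erase 0)) hweighted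
          (Finset.sum_nonneg fun k _ => by positivity) (by positivity)
    _ = carlsonConst r / 2 * m ^ (1 - r) * (m ^ r * a + b) := by
        rw [carlsonConst, show r + 1 = r - 1 + 1 + 1 by ring, Real.rpow_add_one two_ne_zero,
          Real.rpow_add_one two_ne_zero]
        ring

theorem sq_sum_le_carlsonConst_mul {r : ℝ} (hr : 1 < r) {c : ℤ → ℝ} (hc₀ : c 0 = 0)
    {a b : ℝ} (ha : HasSum (fun k => c k ^ 2) a)
    (hb : HasSum (fun k : ℤ => |(k : ℝ)| ^ r * c k ^ 2) b) (S : Finset ℤ) :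
    (∑ k ∈ S, c k) ^ 2 ≤ carlsonConst r * (a ^ (1 - 1 / r) * b ^ (1 / r)) := by
  have hC := carlsonConst_pos hr
  have ha₀ : 0 ≤ a := ha.nonneg fun k => sq_nonneg _
  have hab : a ≤ b := by
    refine hasSum_le (fun k => ?_) ha hb
    rcases eq_or_ne k 0 with rfl | hk
    · simp [hc₀]
    · refine le_mul_of_one_le_left (sq_nonneg _) (Real.one_le_rpow ?_ (by linarith))
      exact_mod_cast Int.one_le_abs hk
  rcases ha₀.eq_or_lt with rfl | ha_pos
  · have hc : c = 0 := by
      ext k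
      simpa using congrFun ((hasSum_zero_iff_of_nonneg fun k => sq_nonneg (c k)).1 ha) k
    simpa [hc] using by positivity
  have hb_pos : 0 < b := ha_pos.trans_le hab
  have hr₀ : r ≠ 0 := by linarith
  set m : ℝ := (b / a) ^ (1 / r) with hm
  have hm_rpow : m ^ r = b / a := by
    rw [hm, ← Real.rpow_mul (by positivity), one_div_mul_cancel hr₀, Real.rpow_one]
  have hm_pos : 0 < m := by positivity
  calc (∑ k ∈ S, c k) ^ 2 ≤ carlsonConst r / 2 * m ^ (1 - r) * (m ^ r * a + b) :=
        sq_sum_le_of_weight hr hm_pos hc₀ ha hb S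
    _ = carlsonConst r * (m * a) := by
        rw [Real.rpow_sub hm_pos, Real.rpow_one, hm_rpow]
        field_simp
        ring
    _ = carlsonConst r * (a ^ (1 - 1 / r) * b ^ (1 / r)) := by
        rw [hm, Real.div_rpow hb_pos.le ha_pos.le, Real.rpow_sub ha_pos, Real.rpow_one]
        ring

theorem norm_sq_le_of_hasSum_fourierCoeff {T : ℝ} [Fact (0 < T)] {r : ℝ} (hr : 1 < r)
    (f : C(AddCircle T, ℂ)) (hf₀ : fourierCoeff f 0 = 0) {a b : ℝ}
    (ha : HasSum (fun k => ‖fourierCoeff f k‖ ^ 2) a)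
    (hb : HasSum (fun k : ℤ => |(k : ℝ)| ^ r * ‖fourierCoeff f k‖ ^ 2) b) (x : AddCircle T) :
    ‖f x‖ ^ 2 ≤ carlsonConst r * (a ^ (1 - 1 / r) * b ^ (1 / r)) := by
  set M := carlsonConst r * (a ^ (1 - 1 / r) * b ^ (1 / r))
  have hpartial : ∀ S : Finset ℤ, ∑ k ∈ S, ‖fourierCoeff f k‖ ≤ √M := fun S =>
    Real.le_sqrt_of_sq_le (sq_sum_le_carlsonConst_mul hr (by simp [hf₀]) ha hb S)
  have hsummable : Summable fun k => ‖fourierCoeff f k‖ :=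
    summable_of_sum_le (fun _ => norm_nonneg _) hpartial
  have hterm : ∀ k, ‖fourierCoeff f k • fourier k x‖ = ‖fourierCoeff f k‖ := fun k => by
    rw [norm_smul, fourier_apply, Circle.norm_coe, mul_one]
  have hM : 0 ≤ M := (sq_nonneg _).trans (sq_sum_le_carlsonConst_mul hr (by simp [hf₀]) ha hb ∅)
  have hnorm : ‖f x‖ ≤ √M :=
    ((has_pointwise_sum_fourier_series_of_summable hsummable.of_norm x).norm_le_of_bounded
      hsummable.hasSum fun k => (hterm k).le).trans (hsummable.tsum_le_of_sum_le hpartial)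
  exact (Real.le_sqrt (norm_nonneg _) hM).1 hnorm

/-- `F` is a fractional derivative of order `s` of the `2π`-periodic function `f`: the Fourier
coefficients of `F` on `(-π, π)` are those of `f` multiplied by `|k| ^ s`. -/
def IsFracDeriv (s : ℝ) (f F : ℝ → ℝ) : Prop :=
  ∀ k : ℤ, (∫ t in Ioo (-π) π, (F t : ℂ) * Complex.exp (-Complex.I * (k : ℂ) * (t : ℂ))) =
    (|(k : ℝ)| ^ s : ℝ) *
      ∫ t in Ioo (-π) π, (f t : ℂ) * Complex.exp (-Complex.I * (k : ℂ) * (t : ℂ))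

lemma neg_pi_lt_pi : -π < π := neg_lt_self Real.pi_pos

lemma fourierCoeffOn_eq_integral_Ioo (g : ℝ → ℂ) (k : ℤ) :
    fourierCoeffOn neg_pi_lt_pi g k = ((2 * π)⁻¹ : ℝ) *
      ∫ t in Ioo (-π) π, g t * Complex.exp (-Complex.I * (k : ℂ) * (t : ℂ)) := by
  rw [fourierCoeffOn_eq_integral, intervalIntegral.integral_of_le neg_pi_lt_pi.le,
    integral_Ioc_eq_integral_Ioo, show π - -π = 2 * π by ring, one_div, Complex.real_smul]
  congr 1
  refine setIntegral_congr_fun measurableSet_Ioo fun t _ => ?_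
  have hexp : fourier (-k) (t : AddCircle (2 * π)) =
      Complex.exp (-Complex.I * (k : ℂ) * (t : ℂ)) := by
    rw [fourier_coe_apply]
    congr 1
    push_cast
    field_simp
  simp only [hexp, smul_eq_mul, mul_comm]

lemma hasSum_sq_fourierCoeffOn_of_continuous {g : ℝ → ℝ} (hg : Continuous g) :
    HasSum (fun k => ‖fourierCoeffOn neg_pi_lt_pi (fun t => (g t : ℂ)) k‖ ^ 2)
      ((2 * π)⁻¹ * ∫ t in Ioo (-π) π, g t ^ 2) := by
  have hgc : Continuous fun t => (g t : ℂ) := by fun_prop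
  obtain ⟨C, hC⟩ :=
    (isCompact_Icc (a := -π) (b := π)).exists_bound_of_continuousOn hgc.continuousOn
  have hmem : MemLp (fun t => (g t : ℂ)) 2 (volume.restrict (Ioc (-π) π)) :=
    MemLp.of_bound hgc.aestronglyMeasurable C <| (ae_restrict_iff' measurableSet_Ioc).2 <|
      ae_of_all _ fun t ht => hC t (Ioc_subset_Icc_self ht)
  convert hasSum_sq_fourierCoeffOn neg_pi_lt_pi hmem using 1
  rw [intervalIntegral.integral_of_le neg_pi_lt_pi.le, integral_Ioc_eq_integral_Ioo,
    show π - -π = 2 * π by ring]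
  simp

lemma IsFracDeriv.norm_fourierCoeffOn {s : ℝ} {f F : ℝ → ℝ} (h : IsFracDeriv s f F) (k : ℤ) :
    ‖fourierCoeffOn neg_pi_lt_pi (fun t => (F t : ℂ)) k‖ =
      |(k : ℝ)| ^ s * ‖fourierCoeffOn neg_pi_lt_pi (fun t => (f t : ℂ)) k‖ := by
  rw [fourierCoeffOn_eq_integral_Ioo, fourierCoeffOn_eq_integral_Ioo, h k, norm_mul, norm_mul,
    norm_mul, Complex.norm_real (|(k : ℝ)| ^ s), Real.norm_of_nonneg (by positivity)]
  ring

lemma IsFracDeriv.hasSum_rpow_mul_sq_fourierCoeffOn {s : ℝ} {f F : ℝ → ℝ}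
    (h : IsFracDeriv s f F) (hF : Continuous F) :
    HasSum (fun k : ℤ => |(k : ℝ)| ^ (2 * s) *
        ‖fourierCoeffOn neg_pi_lt_pi (fun t => (f t : ℂ)) k‖ ^ 2)
      ((2 * π)⁻¹ * ∫ t in Ioo (-π) π, F t ^ 2) := by
  convert hasSum_sq_fourierCoeffOn_of_continuous hF using 2 with k
  rw [h.norm_fourierCoeffOn, mul_pow, mul_comm 2 s, Real.rpow_mul (abs_nonneg _), Real.rpow_two]

theorem IsFracDeriv.sq_le {s : ℝ} (hs : 1 / 2 < s) {f F : ℝ → ℝ} (h : IsFracDeriv s f F)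
    (hf : Continuous f) (hF : Continuous F) (hper : Function.Periodic f (2 * π))
    (hmean : ∫ t in Ioo (-π) π, f t = 0) (t : ℝ) :
    f t ^ 2 ≤ carlsonConst (2 * s) * ((∫ t in Ioo (-π) π, f t ^ 2) ^ (1 - 1 / (2 * s)) *
      (∫ t in Ioo (-π) π, F t ^ 2) ^ (1 / (2 * s))) := by
  have : Fact (0 < 2 * π) := ⟨Real.two_pi_pos⟩
  have hfc_per : Function.Periodic (fun t => (f t : ℂ)) (2 * π) := fun t => by simp only [hper t]
  let f_circle : C(AddCircle (2 * π), ℂ) :=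
    ⟨hfc_per.lift, continuous_coinduced_dom.mpr (Complex.continuous_ofReal.comp hf)⟩
  have hcoeff : fourierCoeff f_circle = fourierCoeffOn neg_pi_lt_pi fun t => (f t : ℂ) := by
    ext k
    rw [fourierCoeff_eq_intervalIntegral _ _ (-π), fourierCoeffOn_eq_integral,
      show -π + 2 * π = π by ring, show π - -π = 2 * π by ring]
    rfl
  have hcoeff_zero : fourierCoeff f_circle 0 = 0 := by
    rw [hcoeff, fourierCoeffOn_eq_integral_Ioo]
    simp [integral_complex_ofReal, hmean]
  have hsum := hasSum_sq_fourierCoeffOn_of_continuous hf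
  have hsum_weighted := h.hasSum_rpow_mul_sq_fourierCoeffOn hF
  rw [← hcoeff] at hsum hsum_weighted
  have hpi : (2 * π)⁻¹ ≤ 1 := inv_le_one_of_one_le₀ (by linarith [Real.pi_gt_three])
  have hr : 1 < 2 * s := by linarith
  have hexp := one_sub_one_div_nonneg hr.le
  have hC := carlsonConst_pos hr
  calc f t ^ 2 = ‖f_circle (t : AddCircle (2 * π))‖ ^ 2 := by
        simp [f_circle]
    _ ≤ _ := norm_sq_le_of_hasSum_fourierCoeff hr f_circle hcoeff_zero hsum hsum_weighted _
    _ ≤ _ := by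
        gcongr <;> exact mul_le_of_le_one_left (integral_nonneg fun _ => sq_nonneg _) hpi

section Holder

variable {α : Type*} [MeasurableSpace α] {μ : Measure α} {f g : α → ℝ} {p q : ℝ}

lemma lintegral_ofReal_rpow_mul_rpow_le (hf : Integrable f μ) (hg : Integrable g μ) (hf₀ : 0 ≤ f)
    (hg₀ : 0 ≤ g) (hp : 0 ≤ p) (hq : 0 ≤ q) (hpq : p + q = 1) :
    ∫⁻ x, ENNReal.ofReal (f x ^ p * g x ^ q) ∂μ ≤
      ENNReal.ofReal ((∫ x, f x ∂μ) ^ p * (∫ x, g x ∂μ) ^ q) := by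
  rw [ENNReal.ofReal_mul (Real.rpow_nonneg (integral_nonneg hf₀) p),
    ← ENNReal.ofReal_rpow_of_nonneg (integral_nonneg hf₀) hp,
    ← ENNReal.ofReal_rpow_of_nonneg (integral_nonneg hg₀) hq,
    ofReal_integral_eq_lintegral_ofReal hf (ae_of_all _ hf₀),
    ofReal_integral_eq_lintegral_ofReal hg (ae_of_all _ hg₀)]
  refine (lintegral_congr fun x => ?_).trans_le (ENNReal.lintegral_mul_norm_pow_le
    hf.aemeasurable.ennreal_ofReal hg.aemeasurable.ennreal_ofReal hp hq hpq)
  rw [ENNReal.ofReal_mul (Real.rpow_nonneg (hf₀ x) p), ENNReal.ofReal_rpow_of_nonneg (hf₀ x) hp,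
    ENNReal.ofReal_rpow_of_nonneg (hg₀ x) hq]

lemma integrable_rpow_mul_rpow (hf : Integrable f μ) (hg : Integrable g μ) (hf₀ : 0 ≤ f)
    (hg₀ : 0 ≤ g) (hp : 0 ≤ p) (hq : 0 ≤ q) (hpq : p + q = 1) :
    Integrable (fun x => f x ^ p * g x ^ q) μ := by
  refine ⟨((hf.aemeasurable.pow_const p).mul (hg.aemeasurable.pow_const q)).aestronglyMeasurable,
    ?_⟩
  rw [hasFiniteIntegral_iff_ofReal (ae_of_all _ fun x =>
    mul_nonneg (Real.rpow_nonneg (hf₀ x) p) (Real.rpow_nonneg (hg₀ x) q))]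
  exact (lintegral_ofReal_rpow_mul_rpow_le hf hg hf₀ hg₀ hp hq hpq).trans_lt ENNReal.ofReal_lt_top

theorem integral_rpow_mul_rpow_le (hf : Integrable f μ) (hg : Integrable g μ) (hf₀ : 0 ≤ f)
    (hg₀ : 0 ≤ g) (hp : 0 ≤ p) (hq : 0 ≤ q) (hpq : p + q = 1) :
    ∫ x, f x ^ p * g x ^ q ∂μ ≤ (∫ x, f x ∂μ) ^ p * (∫ x, g x ∂μ) ^ q := by
  have hbound := lintegral_ofReal_rpow_mul_rpow_le hf hg hf₀ hg₀ hp hq hpq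
  rw [← ofReal_integral_eq_lintegral_ofReal (integrable_rpow_mul_rpow hf hg hf₀ hg₀ hp hq hpq)
    (ae_of_all _ fun x => mul_nonneg (Real.rpow_nonneg (hf₀ x) p) (Real.rpow_nonneg (hg₀ x) q))]
    at hbound
  exact (ENNReal.ofReal_le_ofReal_iff (mul_nonneg (Real.rpow_nonneg (integral_nonneg hf₀) p)
    (Real.rpow_nonneg (integral_nonneg hg₀) q))).1 hbound

lemma integrable_sqrt_mul_sqrt (hf : Integrable f μ) (hg : Integrable g μ) (hf₀ : 0 ≤ f)
    (hg₀ : 0 ≤ g) : Integrable (fun x => √(f x) * √(g x)) μ := by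
  simpa only [Real.sqrt_eq_rpow] using
    integrable_rpow_mul_rpow hf hg hf₀ hg₀ (p := 1 / 2) (q := 1 / 2) (by simp) (by simp)
      (by norm_num)

lemma integral_sqrt_mul_sqrt_le (hf : Integrable f μ) (hg : Integrable g μ) (hf₀ : 0 ≤ f)
    (hg₀ : 0 ≤ g) : ∫ x, √(f x) * √(g x) ∂μ ≤ √(∫ x, f x ∂μ) * √(∫ x, g x ∂μ) := by
  simpa only [Real.sqrt_eq_rpow] using
    integral_rpow_mul_rpow_le hf hg hf₀ hg₀ (p := 1 / 2) (q := 1 / 2) (by simp) (by simp)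
      (by norm_num)

theorem integral_sqrt_rpow_mul_rpow_mul_sqrt_le {U V : α → ℝ} (hf : Integrable f μ)
    (hg : Integrable g μ) (hU : Integrable (fun x => U x ^ 2) μ)
    (hV : Integrable (fun x => V x ^ 2) μ) (hf₀ : 0 ≤ f) (hg₀ : 0 ≤ g) (hU₀ : 0 ≤ U) (hV₀ : 0 ≤ V)
    (hp : 0 ≤ p) (hq : 0 ≤ q) (hpq : p + q = 1) :
    ∫ x, √(f x ^ p * g x ^ q) * √(U x * V x) ∂μ ≤
      √((∫ x, f x ∂μ) ^ p * (∫ x, g x ∂μ) ^ q) *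
        √(√(∫ x, U x ^ 2 ∂μ) * √(∫ x, V x ^ 2 ∂μ)) := by
  have hUV_int : Integrable (fun x => U x * V x) μ := by
    simpa only [Real.sqrt_sq (hU₀ _), Real.sqrt_sq (hV₀ _)] using
      integrable_sqrt_mul_sqrt hU hV (fun _ => sq_nonneg _) fun _ => sq_nonneg _
  have hUV : ∫ x, U x * V x ∂μ ≤ √(∫ x, U x ^ 2 ∂μ) * √(∫ x, V x ^ 2 ∂μ) := by
    simpa only [Real.sqrt_sq (hU₀ _), Real.sqrt_sq (hV₀ _)] using
      integral_sqrt_mul_sqrt_le hU hV (fun _ => sq_nonneg _) fun _ => sq_nonneg _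
  calc ∫ x, √(f x ^ p * g x ^ q) * √(U x * V x) ∂μ
      ≤ √(∫ x, f x ^ p * g x ^ q ∂μ) * √(∫ x, U x * V x ∂μ) :=
        integral_sqrt_mul_sqrt_le (integrable_rpow_mul_rpow hf hg hf₀ hg₀ hp hq hpq) hUV_int
          (fun x => mul_nonneg (Real.rpow_nonneg (hf₀ x) p) (Real.rpow_nonneg (hg₀ x) q))
          fun x => mul_nonneg (hU₀ x) (hV₀ x)
    _ ≤ _ := by
        gcongr
        exact integral_rpow_mul_rpow_le hf hg hf₀ hg₀ hp hq hpq

lemma sum_rpow_mul_rpow_le {ι : Type*} [Fintype ι] {a b : ι → ℝ} (ha : 0 ≤ a) (hb : 0 ≤ b)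
    (hp : 0 ≤ p) (hq : 0 ≤ q) (hpq : p + q = 1) :
    ∑ i, a i ^ p * b i ^ q ≤ (∑ i, a i) ^ p * (∑ i, b i) ^ q := by
  let _ : MeasurableSpace ι := ⊤
  simpa only [integral_count] using integral_rpow_mul_rpow_le (μ := Measure.count)
    Integrable.of_finite Integrable.of_finite ha hb hp hq hpq

end Holder

/-- The cylinder `Ω × (-π, π)`. -/
def cylinderOver {X : Type*} (Ω : Set X) : Set (X × ℝ) := Ω ×ˢ Ioo (-π) π

/-- The integral of a function on a cylinder over the vertical line through `p`. -/
noncomputable def verticalIntegral {X E : Type*} [NormedAddCommGroup E] [NormedSpace ℝ E]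
    (F : X × ℝ → E) (p : X) : E :=
  ∫ t in Ioo (-π) π, F (p, t)

section VerticalIntegral

variable {X E : Type*} [NormedAddCommGroup X] [NormedAddCommGroup E]

lemma integrableOn_of_isBounded [ProperSpace X] [MeasurableSpace X] [OpensMeasurableSpace X]
    {μ : Measure X} [IsFiniteMeasureOnCompacts μ] {Ω : Set X} (hΩ : Bornology.IsBounded Ω)
    {F : X → E} (hF : Continuous F) : IntegrableOn F Ω μ :=
  (hF.continuousOn.integrableOn_compact hΩ.isCompact_closure).mono_set subset_closure

lemma integrableOn_verticalLine {F : X × ℝ → E} (hF : Continuous F) (p : X) :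
    IntegrableOn (fun t => F (p, t)) (Ioo (-π) π) :=
  integrableOn_of_isBounded (Metric.isBounded_Ioo _ _) (by fun_prop)

lemma isBounded_cylinderOver {Ω : Set X} (hΩ : Bornology.IsBounded Ω) :
    Bornology.IsBounded (cylinderOver Ω) :=
  hΩ.prod (Metric.isBounded_Ioo _ _)

lemma hasCompactSupport_of_isBounded [ProperSpace X] {Ω : Set X}
    (hΩ : Bornology.IsBounded Ω) {P : X → E} (hP : ∀ p ∉ Ω, P p = 0) : HasCompactSupport P :=
  HasCompactSupport.intro hΩ.isCompact_closure fun p hp => hP p fun h => hp (subset_closure h)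

variable [NormedSpace ℝ E]

lemma norm_verticalIntegral_le {F : X × ℝ → E} {G : X × ℝ → ℝ} (hG : Continuous G) {p : X}
    (hFG : ∀ t ∈ Ioo (-π) π, ‖F (p, t)‖ ≤ G (p, t)) :
    ‖verticalIntegral F p‖ ≤ verticalIntegral G p :=
  norm_integral_le_of_norm_le (integrableOn_verticalLine hG p)
    ((ae_restrict_iff' measurableSet_Ioo).2 (ae_of_all _ hFG))

lemma verticalIntegral_mono {F G : X × ℝ → ℝ} (hF : Continuous F) (hG : Continuous G)
    (hFG : ∀ x, F x ≤ G x) (p : X) : verticalIntegral F p ≤ verticalIntegral G p :=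
  integral_mono (integrableOn_verticalLine hF p) (integrableOn_verticalLine hG p) fun _ => hFG _

lemma verticalIntegral_finsetSum {J : Type*} {S : Finset J} {F : J → X × ℝ → E}
    (hF : ∀ j, Continuous (F j)) (p : X) :
    verticalIntegral (fun x => ∑ j ∈ S, F j x) p = ∑ j ∈ S, verticalIntegral (F j) p :=
  integral_finsetSum S fun j _ => integrableOn_verticalLine (hF j) p

lemma continuous_verticalIntegral [ProperSpace X] {F : X × ℝ → E} (hF : Continuous F) :
    Continuous (verticalIntegral F) := by
  change Continuous fun p => ∫ t in Ioo (-π) π, F (p, t)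
  have h := continuous_parametric_integral_of_continuous (μ := (volume : Measure ℝ))
    (f := fun p t => F (p, t)) hF (isCompact_Icc (a := -π) (b := π))
  simpa only [integral_Icc_eq_integral_Ioo] using h

lemma setIntegral_cylinderOver [ProperSpace X] [MeasureSpace X] [OpensMeasurableSpace X]
    [SFinite (volume : Measure X)] [IsFiniteMeasureOnCompacts (volume : Measure X)]
    {Ω : Set X} (hΩ : Bornology.IsBounded Ω) {F : X × ℝ → E}
    (hF : Continuous F) : ∫ x in cylinderOver Ω, F x = ∫ p in Ω, verticalIntegral F p := by
  have hint := integrableOn_of_isBounded (μ := volume) (isBounded_cylinderOver hΩ) hF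
  rw [Measure.volume_eq_prod] at hint ⊢
  exact setIntegral_prod F hint

variable [NormedSpace ℝ X] {h : X × ℝ → E}

lemma hasFDerivAt_verticalIntegral [ProperSpace X] (hh : ContDiff ℝ 1 h) (p : X) :
    HasFDerivAt (verticalIntegral h)
      (verticalIntegral (fun x => (fderiv ℝ h x).comp (ContinuousLinearMap.inl ℝ X ℝ)) p) p := by
  have hcont := hh.continuous
  have hderiv : Continuous fun x => (fderiv ℝ h x).comp (ContinuousLinearMap.inl ℝ X ℝ) :=
    (hh.continuous_fderiv (by simp)).clm_comp continuous_const
  obtain ⟨C, hC⟩ := ((isCompact_closedBall p 1).prod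
    (isCompact_Icc (a := -π) (b := π))).exists_bound_of_continuousOn hderiv.continuousOn
  refine hasFDerivAt_integral_of_dominated_of_fderiv_le (F := fun q t => h (q, t))
    (F' := fun q t => (fderiv ℝ h (q, t)).comp (ContinuousLinearMap.inl ℝ X ℝ))
    (bound := fun _ => C)
    (Metric.closedBall_mem_nhds p one_pos)
    (Filter.Eventually.of_forall fun q => Continuous.aestronglyMeasurable (by fun_prop))
    (integrableOn_verticalLine hcont p)
    (hderiv.comp (Continuous.prodMk_right p)).aestronglyMeasurable ?_ (by simp) ?_
  · exact (ae_restrict_iff' measurableSet_Ioo).2 <|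
      ae_of_all _ fun t ht q hq => hC (q, t) ⟨hq, Ioo_subset_Icc_self ht⟩
  · exact ae_of_all _ fun t q _ =>
      (hh.differentiable (by simp) (q, t)).hasFDerivAt.comp q (hasFDerivAt_prodMk_left q t)

lemma contDiff_verticalIntegral [ProperSpace X] (hh : ContDiff ℝ 1 h) :
    ContDiff ℝ 1 (verticalIntegral h) := by
  refine contDiff_one_iff_fderiv.2
    ⟨fun p => (hasFDerivAt_verticalIntegral hh p).differentiableAt, ?_⟩
  simpa only [funext fun p => (hasFDerivAt_verticalIntegral hh p).fderiv] using
    continuous_verticalIntegral ((hh.continuous_fderiv (by simp)).clm_comp continuous_const)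

lemma norm_fderiv_verticalIntegral_le [ProperSpace X] (hh : ContDiff ℝ 1 h) (p : X) :
    ‖fderiv ℝ (verticalIntegral h) p‖ ≤ verticalIntegral (fun x => ‖fderiv ℝ h x‖) p := by
  rw [(hasFDerivAt_verticalIntegral hh p).fderiv]
  refine norm_verticalIntegral_le (hh.continuous_fderiv (by simp)).norm fun t _ => ?_
  exact (ContinuousLinearMap.opNorm_comp_le _ _).trans
    (mul_le_of_le_one_right (norm_nonneg _) (ContinuousLinearMap.norm_inl_le_one ℝ X ℝ))

lemma verticalIntegral_fderiv_inr_eq_zero [CompleteSpace E] (hh : ContDiff ℝ 1 h)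
    (hper : ∀ p t, h (p, t + 2 * π) = h (p, t)) (p : X) :
    verticalIntegral (fun x => fderiv ℝ h x (0, 1)) p = 0 := by
  have := hh.continuous_fderiv (by simp)
  have hline : ∀ t ∈ uIcc (-π) π,
      HasDerivAt (fun t => h (p, t)) (fderiv ℝ h (p, t) (0, 1)) t := fun t _ =>
    (hh.differentiable (by simp) (p, t)).hasFDerivAt.comp_hasDerivAt t
      ((hasDerivAt_const t p).prodMk (hasDerivAt_id t))
  rw [verticalIntegral, ← integral_Ioc_eq_integral_Ioo,
    ← intervalIntegral.integral_of_le (by linarith [Real.pi_pos]),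
    intervalIntegral.integral_eq_sub_of_hasDerivAt hline
      (Continuous.intervalIntegrable (by fun_prop) _ _), sub_eq_zero, ← hper p (-π)]
  congr 2
  ring

lemma verticalIntegral_fderiv_apply [ProperSpace X] [CompleteSpace E] (hh : ContDiff ℝ 1 h)
    (hper : ∀ p t, h (p, t + 2 * π) = h (p, t)) (p : X) (d : X × ℝ) :
    verticalIntegral (fun x => fderiv ℝ h x d) p = fderiv ℝ (verticalIntegral h) p d.1 := by
  have hderiv := hh.continuous_fderiv (by simp)
  have hsplit : ∀ x, fderiv ℝ h x d = fderiv ℝ h x (d.1, 0) + d.2 • fderiv ℝ h x (0, 1) :=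
    fun x => by
      rw [← map_smul, ← map_add]
      congr 1
      ext <;> simp
  have hint : ∀ e, IntegrableOn (fun t => fderiv ℝ h (p, t) e) (Ioo (-π) π) := fun e =>
    integrableOn_verticalLine (hderiv.clm_apply continuous_const) p
  have hint_comp : IntegrableOn
      (fun t => (fderiv ℝ h (p, t)).comp (ContinuousLinearMap.inl ℝ X ℝ)) (Ioo (-π) π) :=
    integrableOn_verticalLine (F := fun x => (fderiv ℝ h x).comp (ContinuousLinearMap.inl ℝ X ℝ))
      (hderiv.clm_comp continuous_const) p
  calc verticalIntegral (fun x => fderiv ℝ h x d) p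
      = verticalIntegral (fun x => fderiv ℝ h x (d.1, 0)) p +
          d.2 • verticalIntegral (fun x => fderiv ℝ h x (0, 1)) p := by
        simp only [verticalIntegral, hsplit]
        rw [← integral_smul]
        exact integral_add (hint _) ((hint _).smul d.2)
    _ = verticalIntegral (fun x => fderiv ℝ h x (d.1, 0)) p := by
        rw [verticalIntegral_fderiv_inr_eq_zero hh hper, smul_zero, add_zero]
    _ = fderiv ℝ (verticalIntegral h) p d.1 := by
        rw [(hasFDerivAt_verticalIntegral hh p).fderiv]
        exact (ContinuousLinearMap.integral_apply hint_comp d.1).symm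

end VerticalIntegral

section Divergence

variable {X : Type*} [NormedAddCommGroup X] [NormedSpace ℝ X] [FiniteDimensional ℝ X]
  [MeasureSpace X] [BorelSpace X] [(volume : Measure X).IsAddHaarMeasure]

lemma integral_fderiv_apply_eq_zero {P : X → ℝ} (hP : ContDiff ℝ 1 P) (hc : HasCompactSupport P)
    (q : X) : ∫ p, fderiv ℝ P p q = 0 := by
  have := hP.continuous_fderiv (by simp)
  have hint : Integrable fun p => fderiv ℝ P p q :=
    Continuous.integrable_of_hasCompactSupport (by fun_prop) (hc.fderiv_apply ℝ q)
  simpa using integral_mul_fderiv_eq_neg_fderiv_mul_of_integrable (g := fun _ => (1 : ℝ))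
    (by simpa using hint) (by simp)
    (by simpa using hP.continuous.integrable_of_hasCompactSupport hc)
    (fun x _ => hP.differentiable (by simp) x) (fun x _ => differentiableAt_const _)

/-- At boundary points of `Ω` the derivatives of `h` need not vanish although `h` does, whence
`hdiv₀`. -/
theorem setIntegral_cylinderOver_divergence_eq_zero {J : Type*} [Fintype J] {Ω : Set X}
    (hΩ : Bornology.IsBounded Ω) {h : J → X × ℝ → ℝ} {d : J → X × ℝ}
    (hh : ∀ j, ContDiff ℝ 1 (h j)) (hper : ∀ j p t, h j (p, t + 2 * π) = h j (p, t))
    (hh₀ : ∀ j p t, p ∉ Ω → h j (p, t) = 0)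
    (hdiv₀ : ∀ p t, p ∉ Ω → ∑ j, fderiv ℝ (h j) (p, t) (d j) = 0) :
    ∫ x in cylinderOver Ω, ∑ j, fderiv ℝ (h j) x (d j) = 0 := by
  have hderiv : ∀ j, Continuous fun x => fderiv ℝ (h j) x (d j) := fun j =>
    ((hh j).continuous_fderiv (by simp)).clm_apply continuous_const
  have hvert : verticalIntegral (fun x => ∑ j, fderiv ℝ (h j) x (d j)) =
      fun p => ∑ j, fderiv ℝ (verticalIntegral (h j)) p (d j).1 := by
    ext p
    rw [verticalIntegral_finsetSum hderiv]
    exact Finset.sum_congr rfl fun j _ => verticalIntegral_fderiv_apply (hh j) (hper j) p (d j)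
  have hsupp : ∀ j, HasCompactSupport (verticalIntegral (h j)) := fun j =>
    hasCompactSupport_of_isBounded hΩ fun p hp => by
      simp [verticalIntegral, hh₀ j p _ hp]
  have hsmooth : ∀ j, ContDiff ℝ 1 (verticalIntegral (h j)) := fun j =>
    contDiff_verticalIntegral (hh j)
  rw [setIntegral_cylinderOver hΩ (continuous_finsetSum _ fun j _ => hderiv j),
    setIntegral_eq_integral_of_forall_compl_eq_zero fun p hp => by
      simp [verticalIntegral, hdiv₀ p _ hp], hvert,
    integral_finsetSum _ fun j _ => ?_]
  · simp [integral_fderiv_apply_eq_zero (hsmooth _) (hsupp _)]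
  · exact (((hsmooth j).continuous_fderiv (by simp)).clm_apply
      continuous_const).integrable_of_hasCompactSupport ((hsupp j).fderiv_apply ℝ _)

end Divergence

lemma integral_norm_sq_le_sq_integral_norm_fderiv {X F : Type*} [NormedAddCommGroup X]
    [NormedSpace ℝ X] [FiniteDimensional ℝ X] [MeasurableSpace X] [BorelSpace X] (μ : Measure X)
    [μ.IsAddHaarMeasure] [NormedAddCommGroup F] [NormedSpace ℝ F]
    (hX : Module.finrank ℝ X = 2) {U : X → F} (hU : ContDiff ℝ 1 U) (hc : HasCompactSupport U) :
    ∫ p, ‖U p‖ ^ 2 ∂μ ≤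
      lintegralPowLePowLIntegralFDerivConst μ 2 * (∫ p, ‖fderiv ℝ U p‖ ∂μ) ^ 2 := by
  have hconj : Real.HolderConjugate (Module.finrank ℝ X) 2 := by
    rw [hX]
    exact_mod_cast Real.HolderConjugate.two_two
  have hint : Integrable (fderiv ℝ U) μ :=
    (hU.continuous_fderiv (by simp)).integrable_of_hasCompactSupport (hc.fderiv ℝ)
  have hint_sq : Integrable (fun p => ‖U p‖ ^ 2) μ :=
    (hU.continuous.norm.pow 2).integrable_of_hasCompactSupport
      (hc.norm.comp_left (zero_pow two_ne_zero))
  have hsobolev := lintegral_pow_le_pow_lintegral_fderiv μ hU hc hconj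
  rw [← ofReal_integral_norm_eq_lintegral_enorm hint, ← ENNReal.ofReal_coe_nnreal] at hsobolev
  rw [← ENNReal.ofReal_le_ofReal_iff (by positivity), ENNReal.ofReal_mul NNReal.zero_le_coe,
    ENNReal.ofReal_pow (by positivity),
    ofReal_integral_eq_lintegral_ofReal hint_sq (ae_of_all _ fun _ => by positivity)]
  simpa only [ENNReal.rpow_two, ENNReal.ofReal_pow (norm_nonneg _), ofReal_norm] using hsobolev

section PointwiseNorms

variable {ι κ : Type*} [Fintype ι] [Fintype κ]

/-- The squared Euclidean length of a vector. -/
def sqNorm (a : ι → ℝ) : ℝ := ∑ i, a i ^ 2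

/-- The squared Frobenius norm of a matrix. -/
def frobeniusSq (A : ι → κ → ℝ) : ℝ := ∑ i, ∑ j, A i j ^ 2

/-- The Jacobian `(∂ⱼ uᵢ)ᵢⱼ` of a vector field on a three-dimensional cylinder. -/
noncomputable def jacobian (u : (ℝ × ℝ) × ℝ → ι → ℝ) (x : (ℝ × ℝ) × ℝ) : ι → Fin 3 → ℝ :=
  fun i j => fderiv ℝ u x (dir3 j) i

lemma sqNorm_nonneg (a : ι → ℝ) : 0 ≤ sqNorm a := Finset.sum_nonneg fun _ _ => sq_nonneg _

lemma frobeniusSq_nonneg (A : ι → κ → ℝ) : 0 ≤ frobeniusSq A :=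
  Finset.sum_nonneg fun i _ => sqNorm_nonneg (A i)

lemma sqNorm_col_le_frobeniusSq (A : ι → κ → ℝ) (j : κ) :
    sqNorm (fun i => A i j) ≤ frobeniusSq A :=
  Finset.sum_le_sum fun _ _ => Finset.single_le_sum (fun _ _ => sq_nonneg _) (Finset.mem_univ j)

lemma sq_sum_mul_le (a b : ι → ℝ) : (∑ i, a i * b i) ^ 2 ≤ sqNorm a * sqNorm b :=
  Finset.sum_mul_sq_le_sq_mul_sq _ a b

lemma abs_sum_mul_le (a b : ι → ℝ) : |∑ i, a i * b i| ≤ √(sqNorm a) * √(sqNorm b) := by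
  rw [← Real.sqrt_mul (sqNorm_nonneg a)]
  exact Real.abs_le_sqrt (sq_sum_mul_le a b)

lemma abs_sum_sum_mul_mul_le (a : κ → ℝ) (b : ι → ℝ) (A : ι → κ → ℝ) :
    |∑ i, ∑ j, a j * b i * A i j| ≤ √(sqNorm a) * √(sqNorm b) * √(frobeniusSq A) := by
  have hrow : sqNorm (fun i => ∑ j, a j * A i j) ≤ sqNorm a * frobeniusSq A := by
    rw [frobeniusSq, Finset.mul_sum]
    exact Finset.sum_le_sum fun i _ => sq_sum_mul_le a (A i)
  calc |∑ i, ∑ j, a j * b i * A i j| = |∑ i, b i * ∑ j, a j * A i j| := by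
        simp only [Finset.mul_sum, mul_assoc, mul_left_comm (b _)]
    _ ≤ √(sqNorm b) * √(sqNorm fun i => ∑ j, a j * A i j) := abs_sum_mul_le _ _
    _ ≤ √(sqNorm b) * √(sqNorm a * frobeniusSq A) := by gcongr
    _ = √(sqNorm a) * √(sqNorm b) * √(frobeniusSq A) := by
        rw [Real.sqrt_mul (sqNorm_nonneg a)]
        ring

@[fun_prop]
lemma continuous_sqNorm : Continuous (sqNorm : (ι → ℝ) → ℝ) := by
  unfold sqNorm
  fun_prop

@[fun_prop]
lemma continuous_frobeniusSq : Continuous (frobeniusSq : (ι → κ → ℝ) → ℝ) := by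
  unfold frobeniusSq
  fun_prop

variable {X : Type*} [NormedAddCommGroup X] [NormedSpace ℝ X] {u : X → ι → ℝ}

lemma contDiff_sqNorm_comp (hu : ContDiff ℝ 1 u) : ContDiff ℝ 1 fun x => sqNorm (u x) :=
  ContDiff.sum fun i _ => (contDiff_pi.1 hu i).pow 2

lemma fderiv_sqNorm_comp_apply {x : X} (hu : DifferentiableAt ℝ u x) (d : X) :
    fderiv ℝ (fun x => sqNorm (u x)) x d = 2 * ∑ i, u x i * fderiv ℝ u x d i := by
  have hcomp := fun i => (hasFDerivAt_pi'.1 hu.hasFDerivAt i).pow 2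
  have hsum : HasFDerivAt (fun x => sqNorm (u x)) _ x :=
    HasFDerivAt.fun_sum (u := Finset.univ) fun i _ => hcomp i
  rw [hsum.fderiv]
  simp [Finset.mul_sum, mul_assoc]

end PointwiseNorms

lemma norm_le_sum_abs_apply_dir3 (L : (ℝ × ℝ) × ℝ →L[ℝ] ℝ) : ‖L‖ ≤ ∑ j, |L (dir3 j)| := by
  refine L.opNorm_le_bound (Finset.sum_nonneg fun _ _ => abs_nonneg _) fun x => ?_
  have hx : x = ∑ j, ![x.1.1, x.1.2, x.2] j • dir3 j := by
    ext <;> simp [Fin.sum_univ_three, dir3]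
  have hcoord : ∀ j, |![x.1.1, x.1.2, x.2] j| ≤ ‖x‖ := by
    simp [Fin.forall_fin_succ, Prod.norm_def]
  calc ‖L x‖ = |∑ j, ![x.1.1, x.1.2, x.2] j * L (dir3 j)| := by
        conv_lhs => rw [hx, map_sum]
        simp only [map_smul, smul_eq_mul, Real.norm_eq_abs]
    _ ≤ ∑ j, |![x.1.1, x.1.2, x.2] j| * |L (dir3 j)| := by
        simpa only [abs_mul] using Finset.abs_sum_le_sum_abs
          (fun j => ![x.1.1, x.1.2, x.2] j * L (dir3 j)) Finset.univ
    _ ≤ ∑ j, ‖x‖ * |L (dir3 j)| := by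
        gcongr with j
        exact hcoord j
    _ = (∑ j, |L (dir3 j)|) * ‖x‖ := by rw [← Finset.mul_sum, mul_comm]

section Exponents

variable {a b c d : ℝ}

lemma sqrt_rpow_mul_rpow (ha : 0 ≤ a) (hb : 0 ≤ b) (p q : ℝ) :
    √(a ^ p * b ^ q) = a ^ (1 / 2 * p) * b ^ (1 / 2 * q) := by
  rw [Real.sqrt_mul (by positivity), Real.sqrt_eq_rpow, Real.sqrt_eq_rpow, ← Real.rpow_mul ha,
    ← Real.rpow_mul hb, mul_comm p, mul_comm q]

lemma sqrt_sqrt_mul_sqrt {K : ℝ} (hK : 0 ≤ K) (ha : 0 ≤ a) (hb : 0 ≤ b) (hc : 0 ≤ c)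
    (hd : 0 ≤ d) : √(√(K * (a * b)) * √(K * (c * d))) =
      √K * (a ^ (1 / 4 : ℝ) * b ^ (1 / 4 : ℝ) * c ^ (1 / 4 : ℝ) * d ^ (1 / 4 : ℝ)) := by
  have hprod : √(K * (a * b)) * √(K * (c * d)) = K * √(a * b * c * d) := by
    rw [← Real.sqrt_mul (by positivity), show K * (a * b) * (K * (c * d)) =
      K ^ 2 * (a * b * c * d) by ring, Real.sqrt_mul (by positivity), Real.sqrt_sq hK]
  have hroot : √√(a * b * c * d) = (a * b * c * d) ^ (1 / 4 : ℝ) := by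
    rw [Real.sqrt_eq_rpow, Real.sqrt_eq_rpow, ← Real.rpow_mul (by positivity)]
    norm_num
  rw [hprod, Real.sqrt_mul hK, hroot, Real.mul_rpow (by positivity) hd,
    Real.mul_rpow (by positivity) hc, Real.mul_rpow ha hb]

end Exponents

section Ladyzhenskaya

variable {ι : Type*} [Fintype ι] {u : (ℝ × ℝ) × ℝ → ι → ℝ}

lemma continuous_jacobian (hu : ContDiff ℝ 1 u) : Continuous (jacobian u) := by
  have := hu.continuous_fderiv (by simp)
  unfold jacobian
  fun_prop

lemma norm_fderiv_sqNorm_comp_le {x : (ℝ × ℝ) × ℝ} (hu : DifferentiableAt ℝ u x) :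
    ‖fderiv ℝ (fun x => sqNorm (u x)) x‖ ≤
      6 * (√(sqNorm (u x)) * √(frobeniusSq (jacobian u x))) := by
  have hdir : ∀ j, |fderiv ℝ (fun x => sqNorm (u x)) x (dir3 j)| ≤
      2 * (√(sqNorm (u x)) * √(frobeniusSq (jacobian u x))) := fun j => by
    rw [fderiv_sqNorm_comp_apply hu, abs_mul, abs_two]
    gcongr
    refine (abs_sum_mul_le _ _).trans ?_
    gcongr
    exact sqNorm_col_le_frobeniusSq (jacobian u x) j
  calc ‖fderiv ℝ (fun x => sqNorm (u x)) x‖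
      ≤ ∑ j, |fderiv ℝ (fun x => sqNorm (u x)) x (dir3 j)| := norm_le_sum_abs_apply_dir3 _
    _ ≤ ∑ _j : Fin 3, 2 * (√(sqNorm (u x)) * √(frobeniusSq (jacobian u x))) :=
        Finset.sum_le_sum fun j _ => hdir j
    _ = 6 * (√(sqNorm (u x)) * √(frobeniusSq (jacobian u x))) := by
        rw [Fin.sum_const, nsmul_eq_mul]
        push_cast
        ring

/-- The constant in the Ladyzhenskaya inequality `setIntegral_sq_verticalIntegral_le`; the summand
`1` makes it positive. -/
noncomputable def ladyzhenskayaConst : ℝ :=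
  36 * (lintegralPowLePowLIntegralFDerivConst (volume : Measure (ℝ × ℝ)) 2 + 1)

lemma ladyzhenskayaConst_pos : 0 < ladyzhenskayaConst := by
  unfold ladyzhenskayaConst
  positivity

theorem integral_norm_fderiv_verticalIntegral_le {Ω : Set (ℝ × ℝ)} (hΩ : Bornology.IsBounded Ω)
    (hu : ContDiff ℝ 1 u) (hu₀ : ∀ p t, p ∉ Ω → u (p, t) = 0) :
    ∫ p, ‖fderiv ℝ (verticalIntegral fun x => sqNorm (u x)) p‖ ≤
      6 * (√(∫ x in cylinderOver Ω, sqNorm (u x)) *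
        √(∫ x in cylinderOver Ω, frobeniusSq (jacobian u x))) := by
  set E : (ℝ × ℝ) × ℝ → ℝ := fun x => sqNorm (u x)
  set G : (ℝ × ℝ) × ℝ → ℝ := fun x => frobeniusSq (jacobian u x)
  have hE : Continuous E := continuous_sqNorm.comp hu.continuous
  have hG : Continuous G := continuous_frobeniusSq.comp (continuous_jacobian hu)
  have hE_diff : ContDiff ℝ 1 E := contDiff_sqNorm_comp hu
  have hEG : Continuous fun x => 6 * (√(E x) * √(G x)) := by fun_prop
  have hE₀ : ∀ p t, p ∉ Ω → E (p, t) = 0 := fun p t hp => by simp [E, sqNorm, hu₀ p t hp]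
  have hbound : ∀ p, ‖fderiv ℝ (verticalIntegral E) p‖ ≤
      verticalIntegral (fun x => 6 * (√(E x) * √(G x))) p := fun p =>
    (norm_fderiv_verticalIntegral_le hE_diff p).trans <|
      verticalIntegral_mono (hE_diff.continuous_fderiv (by simp)).norm hEG
        (fun x => norm_fderiv_sqNorm_comp_le (hu.differentiable (by simp) x)) p
  have hbound₀ : ∀ p ∉ Ω, verticalIntegral (fun x => 6 * (√(E x) * √(G x))) p = 0 :=
    fun p hp => by simp [verticalIntegral, hE₀ p _ hp]
  calc ∫ p, ‖fderiv ℝ (verticalIntegral E) p‖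
      ≤ ∫ p, verticalIntegral (fun x => 6 * (√(E x) * √(G x))) p :=
        integral_mono_of_nonneg (ae_of_all _ fun p => norm_nonneg _)
          ((continuous_verticalIntegral hEG).integrable_of_hasCompactSupport
            (hasCompactSupport_of_isBounded hΩ hbound₀)) (ae_of_all _ hbound)
    _ = ∫ x in cylinderOver Ω, 6 * (√(E x) * √(G x)) := by
        rw [setIntegral_cylinderOver hΩ hEG,
          setIntegral_eq_integral_of_forall_compl_eq_zero hbound₀]
    _ ≤ 6 * (√(∫ x in cylinderOver Ω, E x) * √(∫ x in cylinderOver Ω, G x)) := by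
        rw [integral_const_mul]
        gcongr
        exact integral_sqrt_mul_sqrt_le (integrableOn_of_isBounded (isBounded_cylinderOver hΩ) hE)
          (integrableOn_of_isBounded (isBounded_cylinderOver hΩ) hG) (fun x => sqNorm_nonneg _)
          (fun x => frobeniusSq_nonneg _)

/-- Ladyzhenskaya's inequality in the horizontal variables: the two-dimensional Sobolev inequality
`W^{1,1} ⊆ L²` is applied to the vertical integral of `|u|²`. -/
theorem setIntegral_sq_verticalIntegral_le {Ω : Set (ℝ × ℝ)} (hΩ : Bornology.IsBounded Ω)
    (hu : ContDiff ℝ 1 u) (hu₀ : ∀ p t, p ∉ Ω → u (p, t) = 0) :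
    ∫ p in Ω, verticalIntegral (fun x => sqNorm (u x)) p ^ 2 ≤
      ladyzhenskayaConst * ((∫ x in cylinderOver Ω, sqNorm (u x)) *
        ∫ x in cylinderOver Ω, frobeniusSq (jacobian u x)) := by
  set E := ∫ x in cylinderOver Ω, sqNorm (u x)
  set G := ∫ x in cylinderOver Ω, frobeniusSq (jacobian u x)
  set K := lintegralPowLePowLIntegralFDerivConst (volume : Measure (ℝ × ℝ)) 2
  have hE : 0 ≤ E := integral_nonneg fun x => sqNorm_nonneg _
  have hG : 0 ≤ G := integral_nonneg fun x => frobeniusSq_nonneg _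
  have hU₀ : ∀ p ∉ Ω, verticalIntegral (fun x => sqNorm (u x)) p = 0 := fun p hp => by
    simp [verticalIntegral, sqNorm, hu₀ p _ hp]
  calc ∫ p in Ω, verticalIntegral (fun x => sqNorm (u x)) p ^ 2
      = ∫ p, ‖verticalIntegral (fun x => sqNorm (u x)) p‖ ^ 2 := by
        simp only [Real.norm_eq_abs, sq_abs]
        exact setIntegral_eq_integral_of_forall_compl_eq_zero fun p hp => by simp [hU₀ p hp]
    _ ≤ K * (∫ p, ‖fderiv ℝ (verticalIntegral fun x => sqNorm (u x)) p‖) ^ 2 :=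
        integral_norm_sq_le_sq_integral_norm_fderiv volume (by simp)
          (contDiff_verticalIntegral (contDiff_sqNorm_comp hu))
          (hasCompactSupport_of_isBounded hΩ hU₀)
    _ ≤ (K + 1) * (6 * (√E * √G)) ^ 2 := by
        gcongr
        · exact le_add_of_nonneg_right zero_le_one
        · exact integral_norm_fderiv_verticalIntegral_le hΩ hu hu₀
    _ = ladyzhenskayaConst * (E * G) := by
        rw [mul_pow, mul_pow, Real.sq_sqrt hE, Real.sq_sqrt hG, ladyzhenskayaConst]
        ring

theorem sqrt_mul_sqrt_setIntegral_sq_verticalIntegral_le {κ : Type*} [Fintype κ]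
    {v : (ℝ × ℝ) × ℝ → κ → ℝ} {Ω : Set (ℝ × ℝ)} (hΩ : Bornology.IsBounded Ω)
    (hu : ContDiff ℝ 1 u) (hv : ContDiff ℝ 1 v) (hu₀ : ∀ p t, p ∉ Ω → u (p, t) = 0)
    (hv₀ : ∀ p t, p ∉ Ω → v (p, t) = 0) :
    √(√(∫ p in Ω, verticalIntegral (fun x => sqNorm (u x)) p ^ 2) *
        √(∫ p in Ω, verticalIntegral (fun x => sqNorm (v x)) p ^ 2)) ≤
      √ladyzhenskayaConst * ((∫ x in cylinderOver Ω, sqNorm (u x)) ^ (1 / 4 : ℝ) *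
        (∫ x in cylinderOver Ω, frobeniusSq (jacobian u x)) ^ (1 / 4 : ℝ) *
        (∫ x in cylinderOver Ω, sqNorm (v x)) ^ (1 / 4 : ℝ) *
        (∫ x in cylinderOver Ω, frobeniusSq (jacobian v x)) ^ (1 / 4 : ℝ)) := by
  rw [← sqrt_sqrt_mul_sqrt ladyzhenskayaConst_pos.le (integral_nonneg fun _ => sqNorm_nonneg _)
    (integral_nonneg fun _ => frobeniusSq_nonneg _) (integral_nonneg fun _ => sqNorm_nonneg _)
    (integral_nonneg fun _ => frobeniusSq_nonneg _)]
  gcongr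
  · exact setIntegral_sq_verticalIntegral_le hΩ hu hu₀
  · exact setIntegral_sq_verticalIntegral_le hΩ hv hv₀

end Ladyzhenskaya

section Convection

variable {ι : Type*} [Fintype ι] {Ω : Set (ℝ × ℝ)} {u : (ℝ × ℝ) × ℝ → Fin 3 → ℝ}
  {v w : (ℝ × ℝ) × ℝ → ι → ℝ}

/-- The divergence of a vector field on a three-dimensional cylinder. -/
noncomputable def divergence (u : (ℝ × ℝ) × ℝ → Fin 3 → ℝ) (x : (ℝ × ℝ) × ℝ) : ℝ :=
  ∑ j, jacobian u x j j

/-- The convective derivative `(u · ∇)v`. -/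
noncomputable def convectiveDeriv (u : (ℝ × ℝ) × ℝ → Fin 3 → ℝ) (v : (ℝ × ℝ) × ℝ → ι → ℝ)
    (x : (ℝ × ℝ) × ℝ) (i : ι) : ℝ :=
  ∑ j, u x j * jacobian v x i j

lemma divergence_sum_mul_eq {x : (ℝ × ℝ) × ℝ} (hu : DifferentiableAt ℝ u x)
    (hv : DifferentiableAt ℝ v x) (hw : DifferentiableAt ℝ w x) :
    ∑ j, fderiv ℝ (fun x => u x j * ∑ i, v x i * w x i) x (dir3 j) =
      (∑ i, convectiveDeriv u v x i * w x i + ∑ i, ∑ j, u x j * v x i * jacobian w x i j) +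
        (∑ i, v x i * w x i) * divergence u x := by
  have hprod : ∀ j d, fderiv ℝ (fun x => u x j * ∑ i, v x i * w x i) x d =
      u x j * (∑ i, (v x i * fderiv ℝ w x d i + w x i * fderiv ℝ v x d i)) +
        (∑ i, v x i * w x i) * fderiv ℝ u x d j := fun j d => by
    have hinner := HasFDerivAt.fun_sum (u := Finset.univ) fun i _ =>
      (hasFDerivAt_pi'.1 hv.hasFDerivAt i).mul (hasFDerivAt_pi'.1 hw.hasFDerivAt i)
    have hmul : HasFDerivAt (fun x => u x j * ∑ i, v x i * w x i) _ x :=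
      (hasFDerivAt_pi'.1 hu.hasFDerivAt j).mul hinner
    rw [hmul.fderiv]
    simp
  rw [Finset.sum_congr rfl fun j _ => hprod j (dir3 j), Finset.sum_add_distrib, ← Finset.mul_sum]
  congr 1
  simp only [Finset.mul_sum]
  rw [Finset.sum_comm, ← Finset.sum_add_distrib]
  refine Finset.sum_congr rfl fun i _ => ?_
  rw [convectiveDeriv, Finset.sum_mul, ← Finset.sum_add_distrib]
  refine Finset.sum_congr rfl fun j _ => ?_
  rw [jacobian, jacobian]
  ring

theorem setIntegral_convectiveDeriv_mul_eq_neg (hΩ : Bornology.IsBounded Ω)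
    (hu : ContDiff ℝ 1 u) (hv : ContDiff ℝ 1 v) (hw : ContDiff ℝ 1 w)
    (hu_div : ∀ x, divergence u x = 0)
    (hu_per : ∀ p t, u (p, t + 2 * π) = u (p, t)) (hv_per : ∀ p t, v (p, t + 2 * π) = v (p, t))
    (hw_per : ∀ p t, w (p, t + 2 * π) = w (p, t))
    (hu₀ : ∀ p t, p ∉ Ω → u (p, t) = 0) :
    ∫ x in cylinderOver Ω, ∑ i, convectiveDeriv u v x i * w x i =
      -∫ x in cylinderOver Ω, ∑ i, ∑ j, u x j * v x i * jacobian w x i j := by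
  have hv_jac := continuous_jacobian hv
  have hw_jac := continuous_jacobian hw
  have hu_cont := hu.continuous
  have hv_cont := hv.continuous
  have hw_cont := hw.continuous
  have hdiv : ∀ x, ∑ j, fderiv ℝ (fun x => u x j * ∑ i, v x i * w x i) x (dir3 j) =
      ∑ i, convectiveDeriv u v x i * w x i + ∑ i, ∑ j, u x j * v x i * jacobian w x i j :=
    fun x => by
      rw [divergence_sum_mul_eq (hu.differentiable (by simp) x) (hv.differentiable (by simp) x)
        (hw.differentiable (by simp) x), hu_div, mul_zero, add_zero]
  have hzero := setIntegral_cylinderOver_divergence_eq_zero hΩ (d := dir3)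
    (h := fun j x => u x j * ∑ i, v x i * w x i)
    (fun j => (contDiff_pi.1 hu j).mul
      (ContDiff.sum fun i _ => (contDiff_pi.1 hv i).mul (contDiff_pi.1 hw i)))
    (fun j p t => by simp only [hu_per, hv_per, hw_per])
    (fun j p t hp => by simp [hu₀ p t hp])
    (fun p t hp => by simp [hdiv, convectiveDeriv, hu₀ p t hp])
  simp only [hdiv] at hzero
  rw [eq_neg_iff_add_eq_zero, ← hzero]
  refine (integral_add (integrableOn_of_isBounded (isBounded_cylinderOver hΩ) ?_)
    (integrableOn_of_isBounded (isBounded_cylinderOver hΩ) ?_)).symm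
  · unfold convectiveDeriv
    fun_prop
  · fun_prop

end Convection

section LineEstimates

variable {ι κ X : Type*} [Fintype ι] [Fintype κ] [NormedAddCommGroup X]

theorem frobeniusSq_le_of_isFracDeriv {s : ℝ} (hs : 1 / 2 < s) {A B : ℝ → ι → κ → ℝ}
    (hA : Continuous A) (hB : Continuous B) (hper : Function.Periodic A (2 * π))
    (hmean : ∀ i j, ∫ t in Ioo (-π) π, A t i j = 0)
    (hAB : ∀ i j, IsFracDeriv s (fun t => A t i j) fun t => B t i j) (t : ℝ) :
    frobeniusSq (A t) ≤ carlsonConst (2 * s) *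
      ((∫ t in Ioo (-π) π, frobeniusSq (A t)) ^ (1 - 1 / (2 * s)) *
        (∫ t in Ioo (-π) π, frobeniusSq (B t)) ^ (1 / (2 * s))) := by
  have hC := carlsonConst_pos (r := 2 * s) (by linarith)
  have hsum : ∀ {D : ℝ → ι → κ → ℝ}, Continuous D → ∫ t in Ioo (-π) π, frobeniusSq (D t) =
      ∑ ij : ι × κ, ∫ t in Ioo (-π) π, D t ij.1 ij.2 ^ 2 := fun {D} hD => by
    simp only [frobeniusSq, ← Fintype.sum_prod_type']
    exact integral_finsetSum _ fun ij _ =>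
      integrableOn_of_isBounded (F := fun t => D t ij.1 ij.2 ^ 2) (Metric.isBounded_Ioo _ _)
        (by fun_prop)
  rw [hsum hA, hsum hB, frobeniusSq, ← Fintype.sum_prod_type']
  calc ∑ ij : ι × κ, A t ij.1 ij.2 ^ 2
      ≤ ∑ ij : ι × κ, carlsonConst (2 * s) *
          ((∫ t in Ioo (-π) π, A t ij.1 ij.2 ^ 2) ^ (1 - 1 / (2 * s)) *
            (∫ t in Ioo (-π) π, B t ij.1 ij.2 ^ 2) ^ (1 / (2 * s))) :=
        Finset.sum_le_sum fun ij _ => (hAB ij.1 ij.2).sq_le hs (by fun_prop) (by fun_prop)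
          (fun t => by simp only [hper t]) (hmean ij.1 ij.2) t
    _ ≤ _ := by
        rw [← Finset.mul_sum]
        gcongr
        exact sum_rpow_mul_rpow_le (fun _ => integral_nonneg fun _ => sq_nonneg _)
          (fun _ => integral_nonneg fun _ => sq_nonneg _)
          (one_sub_one_div_nonneg (by linarith)) (one_div_nonneg.2 (by linarith))
          (sub_add_cancel _ _)

theorem abs_verticalIntegral_sum_sum_mul_mul_le {a : X × ℝ → κ → ℝ} {b : X × ℝ → ι → ℝ}
    {A : X × ℝ → ι → κ → ℝ} (ha : Continuous a) (hb : Continuous b) {M : ℝ} {p : X}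
    (hM : ∀ t, frobeniusSq (A (p, t)) ≤ M) :
    |verticalIntegral (fun x => ∑ i, ∑ j, a x j * b x i * A x i j) p| ≤
      √M * (√(verticalIntegral (fun x => sqNorm (a x)) p) *
        √(verticalIntegral (fun x => sqNorm (b x)) p)) := by
  have hbound : Continuous fun x => √M * (√(sqNorm (a x)) * √(sqNorm (b x))) := by fun_prop
  calc |verticalIntegral (fun x => ∑ i, ∑ j, a x j * b x i * A x i j) p|
      ≤ verticalIntegral (fun x => √M * (√(sqNorm (a x)) * √(sqNorm (b x)))) p := by
        refine norm_verticalIntegral_le (E := ℝ) hbound fun t _ => ?_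
        refine (abs_sum_sum_mul_mul_le _ _ _).trans ?_
        rw [mul_comm]
        gcongr
        exact hM t
    _ ≤ _ := by
        unfold verticalIntegral
        rw [integral_const_mul]
        gcongr
        exact integral_sqrt_mul_sqrt_le
          (integrableOn_verticalLine (F := fun x => sqNorm (a x)) (by fun_prop) p)
          (integrableOn_verticalLine (F := fun x => sqNorm (b x)) (by fun_prop) p)
          (fun _ => sqNorm_nonneg _) fun _ => sqNorm_nonneg _

end LineEstimates

section Jacobian

variable {ι : Type*} {w : (ℝ × ℝ) × ℝ → ι → ℝ}

lemma jacobian_add_two_pi [Finite ι] (hper : ∀ p t, w (p, t + 2 * π) = w (p, t)) (p : ℝ × ℝ)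
    (t : ℝ) : jacobian w (p, t + 2 * π) = jacobian w (p, t) := by
  have := Fintype.ofFinite ι
  have hshift : (fun x => w (x + (0, 2 * π))) = w := by
    ext ⟨q, r⟩ : 1
    simp [hper]
  have hfderiv : fderiv ℝ w ((p, t) + (0, 2 * π)) = fderiv ℝ w (p, t) := by
    rw [← fderiv_comp_add_right, hshift]
  rw [Prod.mk_add_mk, add_zero] at hfderiv
  unfold jacobian
  rw [hfderiv]

lemma setIntegral_jacobian_eq_zero [Fintype ι] (hw : ContDiff ℝ 1 w)
    (hper : ∀ p t, w (p, t + 2 * π) = w (p, t))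
    (hmean : ∀ p i, ∫ t in Ioo (-π) π, w (p, t) i = 0) (p : ℝ × ℝ) (i : ι) (j : Fin 3) :
    ∫ t in Ioo (-π) π, jacobian w (p, t) i j = 0 := by
  have hcoord : ∀ x, fderiv ℝ (fun x => w x i) x (dir3 j) = jacobian w x i j := fun x => by
    rw [(hasFDerivAt_pi'.1 (hw.differentiable (by simp) x).hasFDerivAt i).fderiv]
    rfl
  have hmean_zero : verticalIntegral (fun x => w x i) = 0 := funext fun p => hmean p i
  have hderiv := verticalIntegral_fderiv_apply (contDiff_pi.1 hw i)
    (fun p t => by rw [hper]) p (dir3 j)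
  simpa [hcoord, hmean_zero, verticalIntegral] using hderiv

end Jacobian

section TrilinearEstimate

variable {ι κ X : Type*} [Fintype ι] [Fintype κ] [NormedAddCommGroup X] [ProperSpace X]
  [MeasureSpace X] [OpensMeasurableSpace X] [SFinite (volume : Measure X)]
  [IsFiniteMeasureOnCompacts (volume : Measure X)]

/-- The anisotropic Hölder estimate: on each vertical line `a` and `b` are measured in `L²` and `A`
in `L^∞`; horizontally the three factors are measured in `L⁴`, `L⁴` and `L²`. -/
theorem abs_setIntegral_sum_sum_mul_mul_le {Ω : Set X} (hΩ : Bornology.IsBounded Ω)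
    {a : X × ℝ → κ → ℝ} {b : X × ℝ → ι → ℝ} {A B : X × ℝ → ι → κ → ℝ} (ha : Continuous a)
    (hb : Continuous b) (hA : Continuous A) (hB : Continuous B) {C q r : ℝ} (hC : 0 ≤ C)
    (hq : 0 ≤ q) (hr : 0 ≤ r) (hqr : q + r = 1)
    (hAB : ∀ p t, frobeniusSq (A (p, t)) ≤
      C * (verticalIntegral (fun x => frobeniusSq (A x)) p ^ q *
        verticalIntegral (fun x => frobeniusSq (B x)) p ^ r)) :
    |∫ x in cylinderOver Ω, ∑ i, ∑ j, a x j * b x i * A x i j| ≤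
      √C * (√((∫ x in cylinderOver Ω, frobeniusSq (A x)) ^ q *
          (∫ x in cylinderOver Ω, frobeniusSq (B x)) ^ r) *
        √(√(∫ p in Ω, verticalIntegral (fun x => sqNorm (a x)) p ^ 2) *
          √(∫ p in Ω, verticalIntegral (fun x => sqNorm (b x)) p ^ 2))) := by
  set U := verticalIntegral fun x => sqNorm (a x)
  set V := verticalIntegral fun x => sqNorm (b x)
  set M := verticalIntegral fun x => frobeniusSq (A x)
  set N := verticalIntegral fun x => frobeniusSq (B x)
  have hU : Continuous U := continuous_verticalIntegral (by fun_prop)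
  have hV : Continuous V := continuous_verticalIntegral (by fun_prop)
  have hM : Continuous M := continuous_verticalIntegral (by fun_prop)
  have hN : Continuous N := continuous_verticalIntegral (by fun_prop)
  have hU₀ : 0 ≤ U := fun p => integral_nonneg fun t => sqNorm_nonneg _
  have hV₀ : 0 ≤ V := fun p => integral_nonneg fun t => sqNorm_nonneg _
  have hM₀ : 0 ≤ M := fun p => integral_nonneg fun t => frobeniusSq_nonneg _
  have hN₀ : 0 ≤ N := fun p => integral_nonneg fun t => frobeniusSq_nonneg _
  have hbound : Continuous fun p => √C * (√(M p ^ q * N p ^ r) * √(U p * V p)) := by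
    fun_prop (disch := assumption)
  calc |∫ x in cylinderOver Ω, ∑ i, ∑ j, a x j * b x i * A x i j|
      = |∫ p in Ω, verticalIntegral (fun x => ∑ i, ∑ j, a x j * b x i * A x i j) p| := by
        rw [setIntegral_cylinderOver hΩ (by fun_prop)]
    _ ≤ ∫ p in Ω, √C * (√(M p ^ q * N p ^ r) * √(U p * V p)) := by
        have hbound_int := integrableOn_of_isBounded (μ := volume) hΩ hbound
        rw [← Real.norm_eq_abs]
        refine norm_integral_le_of_norm_le hbound_int (ae_of_all _ fun p => ?_)
        rw [← mul_assoc, ← Real.sqrt_mul hC, Real.sqrt_mul (hU₀ p)]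
        exact abs_verticalIntegral_sum_sum_mul_mul_le ha hb (hAB p)
    _ ≤ _ := by
        rw [integral_const_mul,
          setIntegral_cylinderOver hΩ (F := fun x => frobeniusSq (A x)) (by fun_prop),
          setIntegral_cylinderOver hΩ (F := fun x => frobeniusSq (B x)) (by fun_prop)]
        gcongr
        exact integral_sqrt_rpow_mul_rpow_mul_sqrt_le (integrableOn_of_isBounded hΩ hM)
          (integrableOn_of_isBounded hΩ hN) (integrableOn_of_isBounded hΩ (hU.pow 2))
          (integrableOn_of_isBounded hΩ (hV.pow 2)) hM₀ hN₀ hU₀ hV₀ hq hr hqr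

end TrilinearEstimate

theorem statement6_general {ι : Type*} [Fintype ι] {s : ℝ} (hs : 1 / 2 < s) :
    ∃ C : ℝ, 0 < C ∧ ∀ Ω : Set (ℝ × ℝ), Bornology.IsBounded Ω →
      ∀ (u : (ℝ × ℝ) × ℝ → Fin 3 → ℝ) (v w : (ℝ × ℝ) × ℝ → ι → ℝ)
        (Dsw : (ℝ × ℝ) × ℝ → ι → Fin 3 → ℝ),
        ContDiff ℝ 1 u → ContDiff ℝ 1 v → ContDiff ℝ 1 w → Continuous Dsw →
        (∀ x, divergence u x = 0) →
        (∀ p t, u (p, t + 2 * π) = u (p, t)) →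
        (∀ p t, v (p, t + 2 * π) = v (p, t)) →
        (∀ p t, w (p, t + 2 * π) = w (p, t)) →
        (∀ p i, ∫ t in Ioo (-π) π, w (p, t) i = 0) →
        (∀ p t, p ∉ Ω → u (p, t) = 0) →
        (∀ p t, p ∉ Ω → v (p, t) = 0) →
        (∀ p i j, IsFracDeriv s (fun t => jacobian w (p, t) i j) fun t => Dsw (p, t) i j) →
        |∫ x in cylinderOver Ω, ∑ i, convectiveDeriv u v x i * w x i| ≤
          C * (∫ x in cylinderOver Ω, sqNorm (u x)) ^ (1 / 4 : ℝ) *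
            (∫ x in cylinderOver Ω, frobeniusSq (jacobian u x)) ^ (1 / 4 : ℝ) *
            (∫ x in cylinderOver Ω, sqNorm (v x)) ^ (1 / 4 : ℝ) *
            (∫ x in cylinderOver Ω, frobeniusSq (jacobian v x)) ^ (1 / 4 : ℝ) *
            (∫ x in cylinderOver Ω, frobeniusSq (jacobian w x)) ^
              ((1 / 2 : ℝ) * (1 - 1 / (2 * s))) *
            (∫ x in cylinderOver Ω, frobeniusSq (Dsw x)) ^ (1 / (4 * s)) := by
  have hC := carlsonConst_pos (r := 2 * s) (by linarith)
  refine ⟨√(carlsonConst (2 * s)) * √ladyzhenskayaConst,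
    mul_pos (Real.sqrt_pos.2 hC) (Real.sqrt_pos.2 ladyzhenskayaConst_pos), ?_⟩
  intro Ω hΩ u v w Dsw hu hv hw hDsw hu_div hu_per hv_per hw_per hw_mean hu₀ hv₀ hfrac
  have hw_jac := continuous_jacobian hw
  have hline : ∀ p t, frobeniusSq (jacobian w (p, t)) ≤ carlsonConst (2 * s) *
      (verticalIntegral (fun x => frobeniusSq (jacobian w x)) p ^ (1 - 1 / (2 * s)) *
        verticalIntegral (fun x => frobeniusSq (Dsw x)) p ^ (1 / (2 * s))) := fun p =>
    frobeniusSq_le_of_isFracDeriv hs (A := fun t => jacobian w (p, t)) (B := fun t => Dsw (p, t))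
      (by fun_prop) (by fun_prop) (jacobian_add_two_pi hw_per p)
      (setIntegral_jacobian_eq_zero hw hw_per hw_mean p) (hfrac p)
  calc |∫ x in cylinderOver Ω, ∑ i, convectiveDeriv u v x i * w x i|
      = |∫ x in cylinderOver Ω, ∑ i, ∑ j, u x j * v x i * jacobian w x i j| := by
        rw [setIntegral_convectiveDeriv_mul_eq_neg hΩ hu hv hw hu_div hu_per hv_per hw_per hu₀,
          abs_neg]
    _ ≤ _ := abs_setIntegral_sum_sum_mul_mul_le hΩ hu.continuous hv.continuous hw_jac hDsw hC.le
        (one_sub_one_div_nonneg (by linarith)) (one_div_nonneg.2 (by linarith))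
        (sub_add_cancel _ _) hline
    _ ≤ _ := mul_le_mul_of_nonneg_left (mul_le_mul_of_nonneg_left
        (sqrt_mul_sqrt_setIntegral_sq_verticalIntegral_le hΩ hu hv hu₀ hv₀) (Real.sqrt_nonneg _))
        (Real.sqrt_nonneg _)
    _ = _ := by
        rw [sqrt_rpow_mul_rpow (integral_nonneg fun _ => frobeniusSq_nonneg _)
            (integral_nonneg fun _ => frobeniusSq_nonneg _),
          show 1 / 2 * (1 / (2 * s)) = 1 / (4 * s) by ring]
        ring

/-- For `s > 1/2` there is `C = C(s) > 0` such that for every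
bounded open `Ω ⊆ ℝ²`, setting `D = Ω × (-π, π)`, all smooth divergence-free
vector fields `u, v, w` that are `2π`-periodic with mean zero in `x₃` and vanish
on (outside of) the lateral boundary satisfy
`|∫_D (u·∇)v · w| ≤ C ‖u‖₂^{1/2} ‖∇u‖₂^{1/2} ‖v‖₂^{1/2} ‖∇v‖₂^{1/2}
‖∇w‖₂^{1-1/(2s)} ‖∂₃^s ∇w‖₂^{1/(2s)}`, where `∂₃^s ∇w` is characterized through
the vertical Fourier coefficients. -/
theorem statement6 (s : ℝ) (hs : 1 / 2 < s) :
    ∃ C : ℝ, 0 < C ∧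
      ∀ (Ω : Set (ℝ × ℝ)), IsOpen Ω → Bornology.IsBounded Ω →
      ∀ (u v w : (ℝ × ℝ) × ℝ → Fin 3 → ℝ) (Dsw : (ℝ × ℝ) × ℝ → Fin 3 → Fin 3 → ℝ),
        -- smoothness
        ContDiff ℝ (⊤ : ℕ∞) u → ContDiff ℝ (⊤ : ℕ∞) v → ContDiff ℝ (⊤ : ℕ∞) w → Continuous Dsw →
        -- divergence free
        (∀ x, ∑ j : Fin 3, fderiv ℝ u x (dir3 j) j = 0) →
        (∀ x, ∑ j : Fin 3, fderiv ℝ v x (dir3 j) j = 0) →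
        (∀ x, ∑ j : Fin 3, fderiv ℝ w x (dir3 j) j = 0) →
        -- 2π-periodicity in the vertical variable
        (∀ p t, u (p, t + 2 * π) = u (p, t)) →
        (∀ p t, v (p, t + 2 * π) = v (p, t)) →
        (∀ p t, w (p, t + 2 * π) = w (p, t)) →
        -- mean zero in the vertical variable
        (∀ (p : ℝ × ℝ) (i : Fin 3), ∫ t in Ioo (-π) π, u (p, t) i = 0) →
        (∀ (p : ℝ × ℝ) (i : Fin 3), ∫ t in Ioo (-π) π, v (p, t) i = 0) →
        (∀ (p : ℝ × ℝ) (i : Fin 3), ∫ t in Ioo (-π) π, w (p, t) i = 0) →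
        -- vanishing on the lateral boundary
        (∀ (p : ℝ × ℝ) t, p ∉ Ω → u (p, t) = 0) →
        (∀ (p : ℝ × ℝ) t, p ∉ Ω → v (p, t) = 0) →
        (∀ (p : ℝ × ℝ) t, p ∉ Ω → w (p, t) = 0) →
        -- `Dsw = ∂₃^s ∇w`: each vertical Fourier coefficient of `Dsw · i j`
        -- is `|k|^s` times the corresponding coefficient of `∂_j w_i`
        (∀ (p : ℝ × ℝ) (i j : Fin 3) (k : ℤ),
          (∫ t in Ioo (-π) π, (Dsw (p, t) i j : ℂ) * Complex.exp (-Complex.I * (k : ℂ) * (t : ℂ)))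
            = (|(k : ℝ)| ^ s : ℝ) *
              ∫ t in Ioo (-π) π,
                ((fderiv ℝ w (p, t) (dir3 j) i : ℝ) : ℂ) *
                  Complex.exp (-Complex.I * (k : ℂ) * (t : ℂ))) →
        |∫ x in Ω ×ˢ Ioo (-π) π,
            ∑ i : Fin 3, (∑ j : Fin 3, u x j * fderiv ℝ v x (dir3 j) i) * w x i| ≤
          C * (∫ x in Ω ×ˢ Ioo (-π) π, ∑ i : Fin 3, (u x i) ^ 2) ^ ((1 : ℝ) / 4) *
            (∫ x in Ω ×ˢ Ioo (-π) π,
                ∑ i : Fin 3, ∑ j : Fin 3, (fderiv ℝ u x (dir3 j) i) ^ 2) ^ ((1 : ℝ) / 4) *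
            (∫ x in Ω ×ˢ Ioo (-π) π, ∑ i : Fin 3, (v x i) ^ 2) ^ ((1 : ℝ) / 4) *
            (∫ x in Ω ×ˢ Ioo (-π) π,
                ∑ i : Fin 3, ∑ j : Fin 3, (fderiv ℝ v x (dir3 j) i) ^ 2) ^ ((1 : ℝ) / 4) *
            (∫ x in Ω ×ˢ Ioo (-π) π,
                ∑ i : Fin 3, ∑ j : Fin 3, (fderiv ℝ w x (dir3 j) i) ^ 2) ^
              ((1 / 2 : ℝ) * (1 - 1 / (2 * s))) *
            (∫ x in Ω ×ˢ Ioo (-π) π,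
                ∑ i : Fin 3, ∑ j : Fin 3, (Dsw x i j) ^ 2) ^ (1 / (4 * s)) := by
  obtain ⟨C, hC, hbound⟩ := statement6_general (ι := Fin 3) hs
  refine ⟨C, hC, ?_⟩
  intro Ω _ hΩ u v w Dsw hu hv hw hDsw hu_div _ _ hu_per hv_per hw_per _ _ hw_mean hu₀ hv₀ _ hfrac
  exact hbound Ω hΩ u v w Dsw (hu.of_le (by simp)) (hv.of_le (by simp)) (hw.of_le (by simp)) hDsw
    hu_div hu_per hv_per hw_per hw_mean hu₀ hv₀ hfrac
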